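/- arXiv:1907.04585 — 4 statements merged into one kernel-verified Lean document; each statement's English description precedes it below -/
import Mathlib

section
/- Let G be a graph with weight function w, let (H,η) be an extended strip decomposition of G, and for every atom A of (H,η) let I(A) ⊆ A be given; let H', w', and a be as defined. If M is a matching in H', then A(M) is an independent family of atoms of (H,η) and Σ_{A ∈ A(M)} w(I(A)) = a + w'(M). -/
noncomputable section

namespace Paper

/-- The closed neighborhood `N[X]` of a set `X` of vertices. -/
def closedNbhd {V : Type} (G : SimpleGraph V) (X : Set V) : Set V :=
  {v | v ∈ X ∨ ∃ x ∈ X, G.Adj x v}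

/-- The total weight `w(X)` of a set of vertices. -/
def wsum {V : Type} (w : V → ℕ) (X : Set V) : ℕ := ∑ᶠ x ∈ X, w x

/-- `p : Fin m → V` is an induced path in `G` (on `m` vertices). -/
def InducedPathFun {V : Type} (G : SimpleGraph V) {m : ℕ} (p : Fin m → V) : Prop :=
  Function.Injective p ∧
    ∀ i j : Fin m, G.Adj (p i) (p j) ↔ ((i : ℕ) + 1 = (j : ℕ) ∨ (j : ℕ) + 1 = (i : ℕ))

/-- The vertex sets `A` and `B` are non-adjacent in `G`. -/
def NonAdj {V : Type} (G : SimpleGraph V) (A B : Set V) : Prop :=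
  ∀ x ∈ A, ∀ y ∈ B, ¬ G.Adj x y

/-- `A` intersects or is adjacent to `B` in `G`. -/
def Touches {V : Type} (G : SimpleGraph V) (A B : Set V) : Prop :=
  ∃ x ∈ A, ∃ y ∈ B, x = y ∨ G.Adj x y

/-- `T` is (the vertex set of) a triangle in `H`. -/
def IsTriangle {W : Type} (H : SimpleGraph W) (T : Set W) : Prop :=
  ∃ u v x, H.Adj u v ∧ H.Adj u x ∧ H.Adj v x ∧ T = {u, v, x}

/-- An extended strip decomposition of the graph `G`, with pattern graph `H`.
`vmap u` is `η(u)` for a vertex `u` of `H`, `emap e` is `η(e)` for an edge `e` of `H`,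
`endmap u v` is `η(uv, u)` for an edge `uv` of `H` (with distinguished endpoint `u`),
and `tmap T` is `η(T)` for a triangle `T` of `H`.  (The values of `emap`, `endmap`, `tmap`
on non-edges/non-triangles are irrelevant.) -/
structure ESD {V W : Type} (G : SimpleGraph V) (H : SimpleGraph W) where
  vmap : W → Set V
  emap : Sym2 W → Set V
  endmap : W → W → Set V
  tmap : Set W → Set V
  endmap_subset : ∀ u v, H.Adj u v → endmap u v ⊆ emap s(u, v)
  cover : ∀ x : V, (∃ u, x ∈ vmap u) ∨ (∃ e ∈ H.edgeSet, x ∈ emap e) ∨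
    (∃ T, IsTriangle H T ∧ x ∈ tmap T)
  disj_vv : ∀ u u', u ≠ u' → Disjoint (vmap u) (vmap u')
  disj_ee : ∀ e e', e ∈ H.edgeSet → e' ∈ H.edgeSet → e ≠ e' → Disjoint (emap e) (emap e')
  disj_tt : ∀ T T', IsTriangle H T → IsTriangle H T' → T ≠ T' → Disjoint (tmap T) (tmap T')
  disj_ve : ∀ u e, e ∈ H.edgeSet → Disjoint (vmap u) (emap e)
  disj_vt : ∀ u T, IsTriangle H T → Disjoint (vmap u) (tmap T)
  disj_et : ∀ e T, e ∈ H.edgeSet → IsTriangle H T → Disjoint (emap e) (tmap T)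
  fully_adj : ∀ v u u', H.Adj v u → H.Adj v u' → u ≠ u' →
    ∀ x ∈ endmap v u, ∀ y ∈ endmap v u', G.Adj x y
  edge_cond : ∀ x y, G.Adj x y →
    (∃ u, x ∈ vmap u ∧ y ∈ vmap u) ∨
    (∃ e ∈ H.edgeSet, x ∈ emap e ∧ y ∈ emap e) ∨
    (∃ T, IsTriangle H T ∧ x ∈ tmap T ∧ y ∈ tmap T) ∨
    (∃ v u u', H.Adj v u ∧ H.Adj v u' ∧ u ≠ u' ∧ x ∈ endmap v u ∧ y ∈ endmap v u') ∨
    (∃ v u, H.Adj v u ∧ ((x ∈ vmap v ∧ y ∈ endmap v u) ∨ (y ∈ vmap v ∧ x ∈ endmap v u))) ∨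
    (∃ T u u', IsTriangle H T ∧ u ∈ T ∧ u' ∈ T ∧ H.Adj u u' ∧
      ((x ∈ tmap T ∧ y ∈ endmap u u' ∩ endmap u' u) ∨
       (y ∈ tmap T ∧ x ∈ endmap u u' ∩ endmap u' u)))

/-- Names (labels) for the atoms of an extended strip decomposition with pattern graph on `W`:
`bot e = A_e^⊥`, `half u v = A_{uv}^u`, `full e = A_e^{uv}` for an edge `e = uv`,
`vert u = A_u` for a vertex `u`, and `tri T = A_T` for a triangle `T`. -/
inductive AtomLabel (W : Type) where
  | bot : Sym2 W → AtomLabel W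
  | half : W → W → AtomLabel W
  | full : Sym2 W → AtomLabel W
  | vert : W → AtomLabel W
  | tri : Set W → AtomLabel W

/-- An atom label is valid if the underlying feature is really an edge / a triangle of `H`. -/
def ValidAtom {W : Type} (H : SimpleGraph W) : AtomLabel W → Prop
  | .bot e => e ∈ H.edgeSet
  | .half u v => H.Adj u v
  | .full e => e ∈ H.edgeSet
  | .vert _ => True
  | .tri T => IsTriangle H T

/-- The vertex set of `G` corresponding to an atom label. -/
def ESD.atomSet {V W : Type} {G : SimpleGraph V} {H : SimpleGraph W} (D : ESD G H) :
    AtomLabel W → Set V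
  | .bot e => D.emap e \
      Sym2.lift ⟨fun u v => D.endmap u v ∪ D.endmap v u, fun _ _ => Set.union_comm _ _⟩ e
  | .half u v => D.vmap u ∪ (D.emap s(u, v) \ D.endmap v u)
  | .full e =>
      Sym2.lift ⟨fun u v => D.vmap u ∪ D.vmap v, fun _ _ => Set.union_comm _ _⟩ e ∪
        D.emap e ∪ ⋃ T ∈ {T : Set W | IsTriangle H T ∧ ∀ x ∈ e, x ∈ T}, D.tmap T
  | .vert u => D.vmap u
  | .tri T => D.tmap T

/-- The four atoms associated with the edge `uv` of `H`. -/
def Quad {W : Type} (u v : W) : Set (AtomLabel W) :=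
  {AtomLabel.bot s(u, v), AtomLabel.half u v, AtomLabel.half v u, AtomLabel.full s(u, v)}

/-- Two atom labels are conflicting. -/
def Conflict {W : Type} (H : SimpleGraph W) (a b : AtomLabel W) : Prop :=
  (∃ u v, H.Adj u v ∧ a ≠ b ∧ a ∈ Quad u v ∧ b ∈ Quad u v) ∨
  (∃ u v, H.Adj u v ∧
    (((a = AtomLabel.half u v ∨ a = AtomLabel.full s(u, v)) ∧ b = AtomLabel.vert u) ∨
     ((b = AtomLabel.half u v ∨ b = AtomLabel.full s(u, v)) ∧ a = AtomLabel.vert u))) ∨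
  (∃ u v v', H.Adj u v ∧ H.Adj u v' ∧ v ≠ v' ∧
    (a = AtomLabel.half u v ∨ a = AtomLabel.full s(u, v)) ∧
    (b = AtomLabel.half u v' ∨ b = AtomLabel.full s(u, v'))) ∨
  (∃ u v T, H.Adj u v ∧ IsTriangle H T ∧ u ∈ T ∧ v ∈ T ∧
    ((a = AtomLabel.full s(u, v) ∧ b = AtomLabel.tri T) ∨
     (b = AtomLabel.full s(u, v) ∧ a = AtomLabel.tri T)))

/-- A family of atoms is independent if its members are pairwise non-conflicting. -/
def IndepFamily {W : Type} (H : SimpleGraph W) (𝒜 : Set (AtomLabel W)) : Prop :=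
  ∀ a ∈ 𝒜, ∀ b ∈ 𝒜, ¬ Conflict H a b

/-- The vertex `z` of `G` is peripheral in the extended strip decomposition `D`. -/
def Peripheral {V W : Type} {G : SimpleGraph V} {H : SimpleGraph W} (D : ESD G H)
    (z : V) : Prop :=
  ∃ wz u, H.Adj wz u ∧ (∀ u', H.Adj wz u' → u' = u) ∧ D.endmap wz u = {z}
/-- Names for the edges of the graph `H'` obtained from `H` by adding, for every edge
`e` of `H`, a new vertex `x_e` adjacent to both endpoints of `e`:
`Sum.inl e` is the original edge `e` of `H`, and `Sum.inr (e, u)` is the edge `x_e u`. -/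
abbrev EdgeName (W : Type) := Sym2 W ⊕ Sym2 W × W

/-- The graph `H'` obtained from `H` by adding, for every edge `e = uv` of `H`, a new
vertex `x_e` (represented by `Sum.inr e`) adjacent exactly to `u` and `v`. -/
def Hprime {W : Type} (H : SimpleGraph W) : SimpleGraph (W ⊕ Sym2 W) :=
  SimpleGraph.fromRel (fun a b =>
    match a, b with
    | Sum.inl u, Sum.inl v => H.Adj u v
    | Sum.inl u, Sum.inr e => e ∈ H.edgeSet ∧ u ∈ e
    | _, _ => False)

/-- The unordered pair of vertices of `H'` corresponding to an edge name. -/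
def enameToSym {W : Type} : EdgeName W → Sym2 (W ⊕ Sym2 W)
  | Sum.inl e => Sym2.map Sum.inl e
  | Sum.inr (e, u) => s(Sum.inr e, Sum.inl u)

/-- `M` (a set of edge names) is a matching in the graph `H'`: all its members are edges of
`H'`, and distinct members share no endpoint. -/
def IsMatchingIn {W : Type} (H : SimpleGraph W) (M : Set (EdgeName W)) : Prop :=
  (∀ m ∈ M, enameToSym m ∈ (Hprime H).edgeSet) ∧
  ∀ m ∈ M, ∀ m' ∈ M, m ≠ m' → ∀ x, x ∈ enameToSym m → x ∉ enameToSym m'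

/-- `w(I(A))` as an integer, for the chosen independent sets `Ifun`. -/
def wIat {V W : Type} (w : V → ℕ) (Ifun : AtomLabel W → Set V) (a : AtomLabel W) : ℤ :=
  (wsum w (Ifun a) : ℤ)

open scoped Classical in
/-- `f(A_e^u)`, expressed as a function of the endpoint `u` and the unordered edge `e`. -/
def halfW {W : Type} (f : AtomLabel W → ℤ) (u : W) (e : Sym2 W) : ℤ :=
  Sym2.lift ⟨fun a b =>
    if a = u then f (AtomLabel.half u b) else if b = u then f (AtomLabel.half u a) else 0,
    by intro a b; by_cases ha : a = u <;> by_cases hb : b = u <;> simp [ha, hb]⟩ e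

/-- `Σ_{T ∈ 𝒯(e)} f(A_T)`, the sum over all triangles of `H` containing the edge `e`. -/
def triSumW {W : Type} (H : SimpleGraph W) (f : AtomLabel W → ℤ) (e : Sym2 W) : ℤ :=
  ∑ᶠ T ∈ {T : Set W | IsTriangle H T ∧ ∀ x ∈ e, x ∈ T}, f (AtomLabel.tri T)

/-- `f(A_u) + f(A_v)` for the two endpoints `u`, `v` of the edge `e`. -/
def vertW {W : Type} (f : AtomLabel W → ℤ) (e : Sym2 W) : ℤ :=
  Sym2.lift ⟨fun u v => f (AtomLabel.vert u) + f (AtomLabel.vert v),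
    fun _ _ => add_comm _ _⟩ e

/-- The edge-weight function `w'` on the edges of `H'`:
`w'(e) = f(A_e^{uv}) - f(A_u) - f(A_v) - f(A_e^⊥) - Σ_{T ∈ 𝒯(e)} f(A_T)` and
`w'(x_e u) = f(A_e^u) - f(A_u) - f(A_e^⊥)`, where `f(A) = w(I(A))`. -/
def wPrime {W : Type} (H : SimpleGraph W) (f : AtomLabel W → ℤ) : EdgeName W → ℤ
  | Sum.inl e => f (AtomLabel.full e) - vertW f e - f (AtomLabel.bot e) - triSumW H f e
  | Sum.inr (e, u) => halfW f u e - f (AtomLabel.vert u) - f (AtomLabel.bot e)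

/-- The constant `a = Σ_{v ∈ V(H)} w(I(A_v)) + Σ_{e ∈ E(H)} w(I(A_e^⊥)) + Σ_T w(I(A_T))`. -/
def aConst {W : Type} (H : SimpleGraph W) (f : AtomLabel W → ℤ) : ℤ :=
  (∑ᶠ u : W, f (AtomLabel.vert u)) + (∑ᶠ e ∈ H.edgeSet, f (AtomLabel.bot e)) +
    ∑ᶠ T ∈ {T : Set W | IsTriangle H T}, f (AtomLabel.tri T)

/-- The family `𝒜(M)` of atoms associated with a set `M` of edges of `H'`:
`A_e^{uv}` for `e ∈ M`; `A_e^u` for `x_e u ∈ M`; `A_e^⊥` for edges `e` with none of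
`e, x_e u, x_e v` in `M`; `A_u` for vertices `u` of `H` covered by no edge of `M`; and
`A_T` for triangles `T` none of whose edges is in `M`. -/
def atomsOfMatch {W : Type} (H : SimpleGraph W) (M : Set (EdgeName W)) :
    Set (AtomLabel W) :=
  {a | (∃ e, Sum.inl e ∈ M ∧ a = AtomLabel.full e) ∨
       (∃ u v, H.Adj u v ∧ (Sum.inr (s(u, v), u) : EdgeName W) ∈ M ∧
          a = AtomLabel.half u v) ∨
       (∃ e ∈ H.edgeSet, Sum.inl e ∉ M ∧ (∀ u ∈ e, (Sum.inr (e, u) : EdgeName W) ∉ M) ∧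
          a = AtomLabel.bot e) ∨
       (∃ u : W, (∀ m ∈ M, (Sum.inl u : W ⊕ Sym2 W) ∉ enameToSym m) ∧
          a = AtomLabel.vert u) ∨
       (∃ T, IsTriangle H T ∧
          (∀ u v, u ∈ T → v ∈ T → H.Adj u v → (Sum.inl s(u, v) : EdgeName W) ∉ M) ∧
          a = AtomLabel.tri T)}

/-!
Call the atoms `A_v`, `A_e^⊥`, `A_T` basic. Every atom is made of basic parts: a basic atom of
itself only, `A_e^u` of `A_u` and `A_e^⊥`, and `A_e^{uv}` of `A_u`, `A_v`, `A_e^⊥` and the `A_T`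
with `T ∈ T(e)`. Conflicting atoms are distinct and share a basic part. The constant `a` is the
total value of the basic atoms, and `w'(m)` is the value of the atom of `m` minus that of its
basic parts. When `M` is a matching, the basic parts of the members of `A(M)` partition the basic
atoms; this gives both the independence of `A(M)` and the formula for its value.
-/

section

variable {W : Type} {H : SimpleGraph W} {M : Set (EdgeName W)}

instance [Finite W] : Finite (AtomLabel W) :=
  Finite.of_surjective
    (Sum.elim AtomLabel.bot <| Sum.elim (Function.uncurry AtomLabel.half) <|
      Sum.elim AtomLabel.full <| Sum.elim AtomLabel.vert AtomLabel.tri) fun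
    | .bot e => ⟨.inl e, rfl⟩
    | .half u v => ⟨.inr (.inl (u, v)), rfl⟩
    | .full e => ⟨.inr (.inr (.inl e)), rfl⟩
    | .vert u => ⟨.inr (.inr (.inr (.inl u))), rfl⟩
    | .tri T => ⟨.inr (.inr (.inr (.inr T))), rfl⟩

theorem IsTriangle.exists_common_endpoint {T : Set W} (hT : IsTriangle H T) {u v u' v' : W}
    (huv : u ≠ v) (hu'v' : u' ≠ v') (hu : u ∈ T) (hv : v ∈ T) (hu' : u' ∈ T) (hv' : v' ∈ T) :
    ∃ x, x ∈ s(u, v) ∧ x ∈ s(u', v') := by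
  obtain ⟨p, q, r, -, -, -, rfl⟩ := hT
  have hmem : u ∈ s(u', v') ∨ v ∈ s(u', v') := by
    simp only [Set.mem_insert_iff, Set.mem_singleton_iff] at hu hv hu' hv'
    simp only [Sym2.mem_iff]
    grind
  rcases hmem with h | h
  exacts [⟨u, Sym2.mem_mk_left u v, h⟩, ⟨v, Sym2.mem_mk_right u v, h⟩]

theorem inl_mem_edgeSet_Hprime {e : Sym2 W} :
    enameToSym (Sum.inl e) ∈ (Hprime H).edgeSet ↔ e ∈ H.edgeSet := by
  induction e with
  | _ u v =>
    simpa [enameToSym, Hprime, H.adj_comm v u] using fun h : H.Adj u v => h.ne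

theorem inr_mem_edgeSet_Hprime {e : Sym2 W} {u : W} :
    enameToSym (Sum.inr (e, u)) ∈ (Hprime H).edgeSet ↔ e ∈ H.edgeSet ∧ u ∈ e := by
  simp [enameToSym, Hprime]

theorem eq_inl_or_eq_inr_of_mem_edgeSet_Hprime {m : EdgeName W}
    (hm : enameToSym m ∈ (Hprime H).edgeSet) :
    ∃ u v, H.Adj u v ∧ (m = Sum.inl s(u, v) ∨ m = Sum.inr (s(u, v), u)) := by
  rcases m with e | ⟨e, u⟩
  · induction e with
    | _ u v => exact ⟨u, v, inl_mem_edgeSet_Hprime.1 hm, .inl rfl⟩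
  · obtain ⟨he, v, rfl⟩ := inr_mem_edgeSet_Hprime.1 hm
    exact ⟨u, v, he, .inr rfl⟩

/-- The atoms `A_v`, `A_e^⊥` and `A_T` of `(H, η)`, over which the constant `a` is summed. -/
def basicAtoms (H : SimpleGraph W) : Set (AtomLabel W) :=
  Set.range AtomLabel.vert ∪ AtomLabel.bot '' H.edgeSet ∪ AtomLabel.tri '' {T | IsTriangle H T}

/-- The basic atoms that an atom is made of; in the weight `w'` of an edge of `H'` they are the
atoms whose values are subtracted. -/
def basicParts (H : SimpleGraph W) : AtomLabel W → Set (AtomLabel W)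
  | .bot e => {.bot e}
  | .half u v => {.vert u, .bot s(u, v)}
  | .full e => AtomLabel.vert '' {u | u ∈ e} ∪ {.bot e} ∪
      AtomLabel.tri '' {T | IsTriangle H T ∧ ∀ x ∈ e, x ∈ T}
  | .vert u => {.vert u}
  | .tri T => {.tri T}

theorem basicParts_of_mem_basicAtoms {a : AtomLabel W} (ha : a ∈ basicAtoms H) :
    basicParts H a = {a} := by
  rcases ha with (⟨u, rfl⟩ | ⟨e, -, rfl⟩) | ⟨T, -, rfl⟩ <;> rfl

theorem basicParts_subset_basicAtoms {a : AtomLabel W} (ha : ValidAtom H a) :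
    basicParts H a ⊆ basicAtoms H := by
  cases a with
  | bot e =>
    rintro _ rfl
    exact .inl (.inr ⟨e, ha, rfl⟩)
  | half u v =>
    rintro _ (rfl | rfl)
    exacts [.inl (.inl ⟨u, rfl⟩), .inl (.inr ⟨s(u, v), ha, rfl⟩)]
  | full e =>
    rintro _ ((⟨u, -, rfl⟩ | rfl) | ⟨T, hT, rfl⟩)
    exacts [.inl (.inl ⟨u, rfl⟩), .inl (.inr ⟨e, ha, rfl⟩), .inr ⟨T, hT.1, rfl⟩]
  | vert u =>
    rintro _ rfl
    exact .inl (.inl ⟨u, rfl⟩)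
  | tri T =>
    rintro _ rfl
    exact .inr ⟨T, ha, rfl⟩

theorem bot_mem_basicParts_of_mem_Quad {u v : W} {a : AtomLabel W} (ha : a ∈ Quad u v) :
    AtomLabel.bot s(u, v) ∈ basicParts H a := by
  rcases ha with rfl | rfl | rfl | rfl <;> simp [basicParts, Sym2.eq_swap]

theorem vert_mem_basicParts_of_eq_half_or_eq_full {u v : W} {a : AtomLabel W}
    (ha : a = AtomLabel.half u v ∨ a = AtomLabel.full s(u, v)) :
    AtomLabel.vert u ∈ basicParts H a := by
  rcases ha with rfl | rfl <;> simp [basicParts]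

theorem Conflict.ne {a b : AtomLabel W} (h : Conflict H a b) : a ≠ b := by
  rcases h with ⟨-, -, -, hab, -⟩ | ⟨u, v, -, h⟩ | ⟨u, v, v', huv, -, hv, ha, hb⟩ |
    ⟨u, v, T, -, -, -, -, h⟩
  · exact hab
  · rcases h with ⟨rfl | rfl, rfl⟩ | ⟨rfl | rfl, rfl⟩ <;> simp
  · rcases ha with rfl | rfl <;> rcases hb with rfl | rfl <;> simp [hv, huv.ne']
  · rcases h with ⟨rfl, rfl⟩ | ⟨rfl, rfl⟩ <;> simp

theorem Conflict.not_disjoint_basicParts {a b : AtomLabel W} (h : Conflict H a b) :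
    ¬ Disjoint (basicParts H a) (basicParts H b) := by
  rw [Set.not_disjoint_iff]
  rcases h with ⟨u, v, -, -, ha, hb⟩ | ⟨u, v, -, ⟨ha, rfl⟩ | ⟨hb, rfl⟩⟩ |
    ⟨u, v, v', -, -, -, ha, hb⟩ | ⟨u, v, T, -, hT, hu, hv, ⟨rfl, rfl⟩ | ⟨rfl, rfl⟩⟩
  · exact ⟨_, bot_mem_basicParts_of_mem_Quad ha, bot_mem_basicParts_of_mem_Quad hb⟩
  · exact ⟨_, vert_mem_basicParts_of_eq_half_or_eq_full ha, rfl⟩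
  · exact ⟨_, rfl, vert_mem_basicParts_of_eq_half_or_eq_full hb⟩
  · exact ⟨_, vert_mem_basicParts_of_eq_half_or_eq_full ha,
      vert_mem_basicParts_of_eq_half_or_eq_full hb⟩
  · exact ⟨.tri T, by simp [basicParts, hT, hu, hv], rfl⟩
  · exact ⟨.tri T, rfl, by simp [basicParts, hT, hu, hv]⟩

theorem indepFamily_of_pairwiseDisjoint_basicParts {𝒜 : Set (AtomLabel W)}
    (h𝒜 : 𝒜.PairwiseDisjoint (basicParts H)) : IndepFamily H 𝒜 :=
  fun _ ha _ hb hab => hab.not_disjoint_basicParts (h𝒜 ha hb hab.ne)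

open scoped Classical in
/-- The atom that an edge of `H'` contributes to `A(M)`: `A_e^{uv}` for the edge `e = uv`, and
`A_e^u` for the edge `x_e u`. The value at `Sum.inr (e, u)` with `u ∉ e` is irrelevant. -/
def edgeAtom : EdgeName W → AtomLabel W
  | Sum.inl e => .full e
  | Sum.inr (e, u) => if hu : u ∈ e then .half u (Sym2.Mem.other hu) else .vert u

@[simp]
theorem edgeAtom_inl (e : Sym2 W) : edgeAtom (Sum.inl e) = AtomLabel.full e :=
  rfl

@[simp]
theorem edgeAtom_inr (u v : W) : edgeAtom (Sum.inr (s(u, v), u)) = AtomLabel.half u v := by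
  have hu : u ∈ s(u, v) := Sym2.mem_mk_left u v
  rw [edgeAtom, dif_pos hu, Sym2.congr_right.1 (Sym2.other_spec hu)]

theorem injOn_edgeAtom : Set.InjOn edgeAtom {m | enameToSym m ∈ (Hprime H).edgeSet} := by
  intro m hm m' hm' h
  obtain ⟨u, v, -, rfl | rfl⟩ := eq_inl_or_eq_inr_of_mem_edgeSet_Hprime hm <;>
    obtain ⟨u', v', -, rfl | rfl⟩ := eq_inl_or_eq_inr_of_mem_edgeSet_Hprime hm' <;>
    simp_all

section BasicPartsOfEdge

variable {m m' : EdgeName W}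

theorem vert_mem_basicParts_edgeAtom (hm : enameToSym m ∈ (Hprime H).edgeSet) {x : W} :
    AtomLabel.vert x ∈ basicParts H (edgeAtom m) ↔ Sum.inl x ∈ enameToSym m := by
  obtain ⟨u, v, -, rfl | rfl⟩ := eq_inl_or_eq_inr_of_mem_edgeSet_Hprime hm <;>
    simp [basicParts, enameToSym]

theorem bot_mem_basicParts_edgeAtom (hm : enameToSym m ∈ (Hprime H).edgeSet) {e : Sym2 W} :
    AtomLabel.bot e ∈ basicParts H (edgeAtom m) ↔
      m = Sum.inl e ∨ ∃ u ∈ e, m = Sum.inr (e, u) := by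
  obtain ⟨u, v, -, rfl | rfl⟩ := eq_inl_or_eq_inr_of_mem_edgeSet_Hprime hm
  · simp [basicParts, eq_comm]
  · suffices e = s(u, v) ↔ u ∈ e ∧ s(u, v) = e by simpa [basicParts]
    grind

theorem tri_mem_basicParts_edgeAtom (hm : enameToSym m ∈ (Hprime H).edgeSet) {T : Set W} :
    AtomLabel.tri T ∈ basicParts H (edgeAtom m) ↔
      IsTriangle H T ∧ ∃ u v, u ∈ T ∧ v ∈ T ∧ H.Adj u v ∧ m = Sum.inl s(u, v) := by
  obtain ⟨u, v, huv, rfl | rfl⟩ := eq_inl_or_eq_inr_of_mem_edgeSet_Hprime hm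
  · suffices IsTriangle H T → (u ∈ T ∧ v ∈ T ↔
        ∃ u' v', u' ∈ T ∧ v' ∈ T ∧ H.Adj u' v' ∧ s(u, v) = s(u', v')) by simpa [basicParts]
    grind [SimpleGraph.adj_comm]
  · simp [basicParts]

theorem validAtom_edgeAtom (hm : enameToSym m ∈ (Hprime H).edgeSet) :
    ValidAtom H (edgeAtom m) := by
  obtain ⟨u, v, huv, rfl | rfl⟩ := eq_inl_or_eq_inr_of_mem_edgeSet_Hprime hm <;>
    simpa [ValidAtom] using huv

theorem exists_common_endpoint_of_mem_basicParts (hm : enameToSym m ∈ (Hprime H).edgeSet)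
    (hm' : enameToSym m' ∈ (Hprime H).edgeSet) {b : AtomLabel W}
    (hb : b ∈ basicParts H (edgeAtom m)) (hb' : b ∈ basicParts H (edgeAtom m')) :
    ∃ x, x ∈ enameToSym m ∧ x ∈ enameToSym m' := by
  rcases basicParts_subset_basicAtoms (validAtom_edgeAtom hm) hb with
    (⟨u, rfl⟩ | ⟨e, -, rfl⟩) | ⟨T, hT, rfl⟩
  · rw [vert_mem_basicParts_edgeAtom hm] at hb
    rw [vert_mem_basicParts_edgeAtom hm'] at hb'
    exact ⟨_, hb, hb'⟩
  · rw [bot_mem_basicParts_edgeAtom hm] at hb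
    rw [bot_mem_basicParts_edgeAtom hm'] at hb'
    rcases hb with rfl | ⟨u, hu, rfl⟩ <;> rcases hb' with rfl | ⟨u', hu', rfl⟩
    · exact ⟨Sum.inl e.out.1, by simp [enameToSym, Sym2.out_fst_mem]⟩
    · exact ⟨Sum.inl u', by simp [enameToSym, hu']⟩
    · exact ⟨Sum.inl u, by simp [enameToSym, hu]⟩
    · exact ⟨Sum.inr e, by simp [enameToSym]⟩
  · obtain ⟨-, u, v, hu, hv, huv, rfl⟩ := (tri_mem_basicParts_edgeAtom hm).1 hb
    obtain ⟨-, u', v', hu', hv', hu'v', rfl⟩ := (tri_mem_basicParts_edgeAtom hm').1 hb'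
    obtain ⟨x, hx, hx'⟩ := IsTriangle.exists_common_endpoint hT huv.ne hu'v'.ne hu hv hu' hv'
    exact ⟨Sum.inl x, Sym2.mem_map.2 ⟨x, hx, rfl⟩, Sym2.mem_map.2 ⟨x, hx', rfl⟩⟩

end BasicPartsOfEdge

theorem mem_atomsOfMatch_iff (hM : ∀ m ∈ M, enameToSym m ∈ (Hprime H).edgeSet) {a : AtomLabel W} :
    a ∈ atomsOfMatch H M ↔
      a ∈ edgeAtom '' M ∨ a ∈ basicAtoms H ∧ ∀ m ∈ M, a ∉ basicParts H (edgeAtom m) := by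
  constructor
  · rintro (⟨e, he, rfl⟩ | ⟨u, v, -, huv, rfl⟩ | ⟨e, he, heM, heM', rfl⟩ | ⟨u, huM, rfl⟩ |
      ⟨T, hT, hTM, rfl⟩)
    · exact .inl ⟨_, he, edgeAtom_inl e⟩
    · exact .inl ⟨_, huv, edgeAtom_inr u v⟩
    · refine .inr ⟨.inl (.inr ⟨e, he, rfl⟩), fun m hm hem => ?_⟩
      rcases (bot_mem_basicParts_edgeAtom (hM m hm)).1 hem with rfl | ⟨u, hu, rfl⟩
      exacts [heM hm, heM' u hu hm]
    · exact .inr ⟨.inl (.inl ⟨u, rfl⟩), fun m hm hum =>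
        huM m hm ((vert_mem_basicParts_edgeAtom (hM m hm)).1 hum)⟩
    · refine .inr ⟨.inr ⟨T, hT, rfl⟩, fun m hm hTm => ?_⟩
      obtain ⟨-, u, v, hu, hv, huv, rfl⟩ := (tri_mem_basicParts_edgeAtom (hM m hm)).1 hTm
      exact hTM u v hu hv huv hm
  · rintro (⟨m, hm, rfl⟩ | ⟨(⟨u, rfl⟩ | ⟨e, he, rfl⟩) | ⟨T, hT, rfl⟩, haM⟩)
    · obtain ⟨u, v, huv, rfl | rfl⟩ := eq_inl_or_eq_inr_of_mem_edgeSet_Hprime (hM m hm)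
      · exact .inl ⟨_, hm, edgeAtom_inl _⟩
      · exact .inr <| .inl ⟨u, v, huv, hm, edgeAtom_inr u v⟩
    · exact .inr <| .inr <| .inr <| .inl ⟨u, fun m hm hum =>
        haM m hm ((vert_mem_basicParts_edgeAtom (hM m hm)).2 hum), rfl⟩
    · exact .inr <| .inr <| .inl ⟨e, he,
        fun hm => haM _ hm ((bot_mem_basicParts_edgeAtom (hM _ hm)).2 (.inl rfl)),
        fun u hu hm => haM _ hm ((bot_mem_basicParts_edgeAtom (hM _ hm)).2 (.inr ⟨u, hu, rfl⟩)),
        rfl⟩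
    · exact .inr <| .inr <| .inr <| .inr ⟨T, hT, fun u v hu hv huv hm => haM _ hm
        ((tri_mem_basicParts_edgeAtom (hM _ hm)).2 ⟨hT, u, v, hu, hv, huv, rfl⟩), rfl⟩

theorem validAtom_of_mem_atomsOfMatch (hM : ∀ m ∈ M, enameToSym m ∈ (Hprime H).edgeSet)
    {a : AtomLabel W} (ha : a ∈ atomsOfMatch H M) : ValidAtom H a := by
  rcases ha with ⟨e, he, rfl⟩ | ⟨u, v, huv, -, rfl⟩ | ⟨e, he, -, -, rfl⟩ | ⟨u, -, rfl⟩ |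
    ⟨T, hT, -, rfl⟩
  exacts [validAtom_edgeAtom (hM _ he), huv, he, trivial, hT]

theorem iUnion_basicParts_atomsOfMatch (hM : ∀ m ∈ M, enameToSym m ∈ (Hprime H).edgeSet) :
    ⋃ a ∈ atomsOfMatch H M, basicParts H a = basicAtoms H := by
  refine Set.Subset.antisymm (Set.iUnion₂_subset fun a ha => basicParts_subset_basicAtoms
    (validAtom_of_mem_atomsOfMatch hM ha)) fun b hb => Set.mem_iUnion₂.2 ?_
  by_cases hbM : ∃ m ∈ M, b ∈ basicParts H (edgeAtom m)
  · obtain ⟨m, hm, hbm⟩ := hbM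
    exact ⟨edgeAtom m, (mem_atomsOfMatch_iff hM).2 (.inl ⟨m, hm, rfl⟩), hbm⟩
  · push Not at hbM
    exact ⟨b, (mem_atomsOfMatch_iff hM).2 (.inr ⟨hb, hbM⟩),
      by rw [basicParts_of_mem_basicAtoms hb]; rfl⟩

theorem IsMatchingIn.pairwiseDisjoint_basicParts (hM : IsMatchingIn H M) :
    (atomsOfMatch H M).PairwiseDisjoint (basicParts H) := by
  intro a ha b hb hab
  rw [mem_atomsOfMatch_iff hM.1] at ha hb
  rcases ha with ⟨m, hm, rfl⟩ | ⟨ha, haM⟩ <;> rcases hb with ⟨m', hm', rfl⟩ | ⟨hb, hbM⟩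
  · refine Set.disjoint_left.2 fun c hc hc' => ?_
    obtain ⟨x, hx, hx'⟩ :=
      exists_common_endpoint_of_mem_basicParts (hM.1 m hm) (hM.1 m' hm') hc hc'
    exact hM.2 m hm m' hm' (ne_of_apply_ne edgeAtom hab) x hx hx'
  · simpa only [Function.onFun, basicParts_of_mem_basicAtoms hb, Set.disjoint_singleton_right]
      using hbM m hm
  · simpa only [Function.onFun, basicParts_of_mem_basicAtoms ha, Set.disjoint_singleton_left]
      using haM m' hm'
  · simpa only [Function.onFun, basicParts_of_mem_basicAtoms ha, basicParts_of_mem_basicAtoms hb,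
      Set.disjoint_singleton] using hab

/-- The value of an atom minus the total value of its basic parts. -/
def gain (H : SimpleGraph W) (f : AtomLabel W → ℤ) (a : AtomLabel W) : ℤ :=
  f a - ∑ᶠ b ∈ basicParts H a, f b

theorem gain_of_mem_basicAtoms (f : AtomLabel W → ℤ) {a : AtomLabel W} (ha : a ∈ basicAtoms H) :
    gain H f a = 0 := by
  rw [gain, basicParts_of_mem_basicAtoms ha, finsum_mem_singleton, sub_self]

section Sums

variable [Finite W] (f : AtomLabel W → ℤ)

theorem finsum_mem_vert_union_bot_union_tri (U : Set W) (E : Set (Sym2 W)) (𝒯 : Set (Set W)) :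
    ∑ᶠ b ∈ AtomLabel.vert '' U ∪ AtomLabel.bot '' E ∪ AtomLabel.tri '' 𝒯, f b =
      ∑ᶠ u ∈ U, f (.vert u) + ∑ᶠ e ∈ E, f (.bot e) + ∑ᶠ T ∈ 𝒯, f (.tri T) := by
  have hvert : Function.Injective (AtomLabel.vert (W := W)) := fun _ _ => AtomLabel.vert.inj
  have hbot : Function.Injective (AtomLabel.bot (W := W)) := fun _ _ => AtomLabel.bot.inj
  have htri : Function.Injective (AtomLabel.tri (W := W)) := fun _ _ => AtomLabel.tri.inj
  rw [finsum_mem_union _ (Set.toFinite _) (Set.toFinite _),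
    finsum_mem_union _ (Set.toFinite _) (Set.toFinite _), finsum_mem_image hvert.injOn,
    finsum_mem_image hbot.injOn, finsum_mem_image htri.injOn]
  all_goals
    rw [Set.disjoint_left]
    aesop

theorem finsum_mem_basicAtoms : ∑ᶠ b ∈ basicAtoms H, f b = aConst H f := by
  rw [basicAtoms, ← Set.image_univ, finsum_mem_vert_union_bot_union_tri, finsum_mem_univ, aConst]

theorem finsum_mem_basicParts_full {u v : W} (huv : u ≠ v) :
    ∑ᶠ b ∈ basicParts H (.full s(u, v)), f b =
      vertW f s(u, v) + f (.bot s(u, v)) + triSumW H f s(u, v) := by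
  have hends : {x | x ∈ s(u, v)} = {u, v} := by
    ext x
    simp
  rw [basicParts, ← Set.image_singleton, finsum_mem_vert_union_bot_union_tri, hends,
    finsum_mem_pair huv, finsum_mem_singleton]
  rfl

theorem gain_edgeAtom {m : EdgeName W} (hm : enameToSym m ∈ (Hprime H).edgeSet) :
    gain H f (edgeAtom m) = wPrime H f m := by
  obtain ⟨u, v, huv, rfl | rfl⟩ := eq_inl_or_eq_inr_of_mem_edgeSet_Hprime hm
  · rw [edgeAtom_inl, gain, finsum_mem_basicParts_full f huv.ne]
    simp only [wPrime]
    ring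
  · rw [edgeAtom_inr, gain, basicParts, finsum_mem_pair (by simp)]
    simp only [wPrime, halfW, Sym2.lift_mk, if_true]
    ring

theorem finsum_mem_atomsOfMatch_gain (hM : ∀ m ∈ M, enameToSym m ∈ (Hprime H).edgeSet) :
    ∑ᶠ a ∈ atomsOfMatch H M, gain H f a = ∑ᶠ m ∈ M, wPrime H f m := by
  have hsupport : atomsOfMatch H M ∩ Function.support (gain H f) =
      edgeAtom '' M ∩ Function.support (gain H f) := by
    ext a
    have := gain_of_mem_basicAtoms (H := H) f (a := a)
    simp only [Set.mem_inter_iff, mem_atomsOfMatch_iff hM, Function.mem_support]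
    tauto
  calc ∑ᶠ a ∈ atomsOfMatch H M, gain H f a
    _ = ∑ᶠ a ∈ edgeAtom '' M, gain H f a := finsum_mem_inter_support_eq _ _ _ hsupport
    _ = ∑ᶠ m ∈ M, gain H f (edgeAtom m) := finsum_mem_image (injOn_edgeAtom.mono hM)
    _ = ∑ᶠ m ∈ M, wPrime H f m := finsum_mem_congr rfl fun m hm => gain_edgeAtom f (hM m hm)

theorem IsMatchingIn.finsum_mem_atomsOfMatch (hM : IsMatchingIn H M) :
    ∑ᶠ a ∈ atomsOfMatch H M, f a = aConst H f + ∑ᶠ m ∈ M, wPrime H f m := by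
  calc ∑ᶠ a ∈ atomsOfMatch H M, f a
    _ = ∑ᶠ a ∈ atomsOfMatch H M, (∑ᶠ b ∈ basicParts H a, f b + gain H f a) := by
      simp only [gain, add_sub_cancel]
    _ = ∑ᶠ a ∈ atomsOfMatch H M, ∑ᶠ b ∈ basicParts H a, f b +
          ∑ᶠ a ∈ atomsOfMatch H M, gain H f a :=
      finsum_mem_add_distrib (Set.toFinite _)
    _ = ∑ᶠ b ∈ basicAtoms H, f b + ∑ᶠ m ∈ M, wPrime H f m := by
      rw [← finsum_mem_biUnion hM.pairwiseDisjoint_basicParts (Set.toFinite _)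
          fun _ _ => Set.toFinite _,
        iUnion_basicParts_atomsOfMatch hM.1, finsum_mem_atomsOfMatch_gain f hM.1]
    _ = aConst H f + ∑ᶠ m ∈ M, wPrime H f m := by rw [finsum_mem_basicAtoms]

end Sums

end

theorem stmt9_general {W : Type} [Finite W] (H : SimpleGraph W) (f : AtomLabel W → ℤ)
    (M : Set (EdgeName W)) (hM : IsMatchingIn H M) :
    (∀ a ∈ atomsOfMatch H M, ValidAtom H a) ∧
    IndepFamily H (atomsOfMatch H M) ∧
      ∑ᶠ a ∈ atomsOfMatch H M, f a = aConst H f + ∑ᶠ m ∈ M, wPrime H f m :=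
  ⟨fun _ => validAtom_of_mem_atomsOfMatch hM.1,
    indepFamily_of_pairwiseDisjoint_basicParts hM.pairwiseDisjoint_basicParts,
    hM.finsum_mem_atomsOfMatch f⟩

/-- if `M` is a matching in `H'`, then `𝒜(M)` is an independent family of
atoms of the extended strip decomposition `(H, η)` of `G`, and
`Σ_{A ∈ 𝒜(M)} w(I(A)) = a + w'(M)`. -/
theorem stmt9 {V W : Type} [Fintype V] [Fintype W] (G : SimpleGraph V) (H : SimpleGraph W)
    (D : ESD G H) (w : V → ℕ) (Ifun : AtomLabel W → Set V)
    (hsub : ∀ a, ValidAtom H a → Ifun a ⊆ D.atomSet a)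
    (hind : ∀ a, ValidAtom H a → ∀ x ∈ Ifun a, ∀ y ∈ Ifun a, ¬ G.Adj x y)
    (M : Set (EdgeName W)) (hM : IsMatchingIn H M) :
    (∀ a ∈ atomsOfMatch H M, ValidAtom H a) ∧
    IndepFamily H (atomsOfMatch H M) ∧
      (∑ᶠ a ∈ atomsOfMatch H M, wIat w Ifun a) =
        aConst H (wIat w Ifun) + ∑ᶠ m ∈ M, wPrime H (wIat w Ifun) m := by
  exact stmt9_general H (wIat w Ifun) M hM

end Paper
end
end

section
/- Let (H,η) be an extended strip decomposition of a graph G. Suppose P1, P2, P3 are three induced paths in G that are pairwise vertex-disjoint and pairwise non-adjacent, and each of P1, P2, P3 has an endpoint that is peripheral in (H,η). Then no atom of (H,η) intersects or is adjacent to each of P1, P2, P3. -/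
noncomputable section

namespace Paper

/-!
Each path is a connected set containing a peripheral vertex. Say that such a set visits a vertex `w`
of `H` if it meets some `η(wa, w)`. Leaving the full atom of an edge of `H` is only possible through
one of its endpoints, so a set touching an atom visits one of at most two vertices of `H` determined
by the atom. By pigeonhole it remains to see that two of the sets, `P` and `Q`, never visit the same
vertex `w`.

Suppose they do. By full adjacency both meet the same `η(wa, w)`. Since `P` reaches its peripheral
vertex from `η(wa)`, either that vertex sits at `w` or `a`, or `P` passes to another strip through
`w` or `a`; in either case no set non-adjacent to and disjoint from `P` visits that vertex of `H`.
It is not `w`, which `Q` visits, so it is `a`. By symmetry the same holds for `Q`, so `Q` visits `a`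
as well, a contradiction.
-/

section Connectivity

theorem exists_adj_mem_notMem_of_preconnected {V : Type*} {G : SimpleGraph V} {P A : Set V}
    (hP : (G.induce P).Preconnected) {y z : V} (hy : y ∈ P) (hyA : y ∈ A) (hz : z ∈ P)
    (hzA : z ∉ A) :
    ∃ a ∈ P, ∃ b ∈ P, a ∈ A ∧ b ∉ A ∧ G.Adj a b := by
  obtain ⟨walk⟩ := hP ⟨y, hy⟩ ⟨z, hz⟩
  obtain ⟨d, -, hfst, hsnd⟩ := walk.exists_boundary_dart (Subtype.val ⁻¹' A) hyA hzA
  exact ⟨d.fst, d.fst.2, d.snd, d.snd.2, hfst, hsnd, d.adj⟩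

variable {V : Type} {G : SimpleGraph V}

theorem InducedPathFun.preconnected_induce_range {m : ℕ} {p : Fin m → V}
    (hp : InducedPathFun G p) : (G.induce (Set.range p)).Preconnected := by
  let toRange : SimpleGraph.pathGraph m →g G.induce (Set.range p) :=
    { toFun := Set.rangeFactorization p
      map_rel' := fun hij => (hp.2 _ _).2 (SimpleGraph.pathGraph_adj.1 hij) }
  exact (SimpleGraph.pathGraph_preconnected m).map toRange Set.rangeFactorization_surjective

theorem not_touches_of_disjoint_of_nonAdj {P Q : Set V} (hd : Disjoint P Q) (ha : NonAdj G P Q) :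
    ¬ Touches G P Q := by
  rintro ⟨x, hx, y, hy, rfl | hxy⟩
  · exact hd.notMem_of_mem_left hx hy
  · exact ha x hx y hy hxy

theorem Touches.symm {P Q : Set V} : Touches G P Q → Touches G Q P :=
  fun ⟨x, hx, y, hy, h⟩ => ⟨y, hy, x, hx, h.imp Eq.symm SimpleGraph.Adj.symm⟩

theorem Touches.mono_left {A B P : Set V} (hAB : A ⊆ B) : Touches G A P → Touches G B P :=
  fun ⟨x, hx, h⟩ => ⟨x, hAB hx, h⟩

theorem Touches.exists_adj_of_preconnected {A P : Set V} (hAP : Touches G A P)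
    (hP : (G.induce P).Preconnected) {z : V} (hz : z ∈ P) (hzA : z ∉ A) :
    ∃ x ∈ P, x ∉ A ∧ ∃ y ∈ A, G.Adj x y := by
  obtain ⟨y, hyA, x, hxP, h⟩ := hAP
  by_cases hxA : x ∈ A
  · obtain ⟨a, -, b, hb, haA, hbA, hab⟩ :=
      exists_adj_mem_notMem_of_preconnected hP hxP hxA hz hzA
    exact ⟨b, hb, hbA, a, haA, hab.symm⟩
  · rcases h with rfl | hyx
    · exact (hxA hyA).elim
    · exact ⟨x, hxP, hxA, y, hyA, hyx.symm⟩

end Connectivity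

section StripDecomposition

variable {V W : Type} {G : SimpleGraph V} {H : SimpleGraph W}

theorem IsTriangle.mem_or_mem_of_subset {T : Set W} (hT : IsTriangle H T) {e : Sym2 W}
    (he : ¬ e.IsDiag) (heT : ∀ w ∈ e, w ∈ T) {a b : W} (ha : a ∈ T) (hb : b ∈ T) (hab : a ≠ b) :
    a ∈ e ∨ b ∈ e := by
  obtain ⟨r, s, t, -, -, -, rfl⟩ := hT
  induction e using Sym2.ind with
  | _ u v =>
    obtain ⟨hu, hv⟩ := Sym2.ball.1 heT
    simp only [Set.mem_insert_iff, Set.mem_singleton_iff, Sym2.mem_iff, Sym2.mk_isDiag_iff]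
      at he hu hv ha hb ⊢
    grind

namespace ESD

theorem vmap_eq_of_mem (D : ESD G H) {u u' : W} {x : V} (hx : x ∈ D.vmap u)
    (hx' : x ∈ D.vmap u') : u = u' :=
  not_imp_comm.1 (D.disj_vv u u') (Set.not_disjoint_iff.2 ⟨x, hx, hx'⟩)

theorem emap_eq_of_mem (D : ESD G H) {e e' : Sym2 W} (he : e ∈ H.edgeSet) (he' : e' ∈ H.edgeSet)
    {x : V} (hx : x ∈ D.emap e) (hx' : x ∈ D.emap e') : e = e' :=
  not_imp_comm.1 (D.disj_ee e e' he he') (Set.not_disjoint_iff.2 ⟨x, hx, hx'⟩)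

theorem tmap_eq_of_mem (D : ESD G H) {T T' : Set W} (hT : IsTriangle H T) (hT' : IsTriangle H T')
    {x : V} (hx : x ∈ D.tmap T) (hx' : x ∈ D.tmap T') : T = T' :=
  not_imp_comm.1 (D.disj_tt T T' hT hT') (Set.not_disjoint_iff.2 ⟨x, hx, hx'⟩)

theorem mem_vmap_or_mem_endmap_of_adj (D : ESD G H) {u : W} {x y : V} (hxy : G.Adj x y)
    (hy : y ∈ D.vmap u) : x ∈ D.vmap u ∨ ∃ a, H.Adj u a ∧ x ∈ D.endmap u a := by
  have notMem_emap {e : Sym2 W} (he : e ∈ H.edgeSet) : y ∉ D.emap e :=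
    (D.disj_ve u e he).notMem_of_mem_left hy
  have notMem_endmap {a b : W} (hab : H.Adj a b) : y ∉ D.endmap a b :=
    fun h => notMem_emap hab (D.endmap_subset a b hab h)
  have notMem_tmap {T : Set W} (hT : IsTriangle H T) : y ∉ D.tmap T :=
    (D.disj_vt u T hT).notMem_of_mem_left hy
  rcases D.edge_cond x y hxy with ⟨t, hxt, hyt⟩ | ⟨e, he, -, hye⟩ | ⟨T, hT, -, hyT⟩ |
    ⟨t, a, b, -, htb, -, -, hyb⟩ | ⟨t, a, hta, ⟨-, hya⟩ | ⟨hyt, hxa⟩⟩ |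
    ⟨T, a, b, hT, -, -, hab, ⟨-, hya, -⟩ | ⟨hyT, -⟩⟩
  · exact .inl (D.vmap_eq_of_mem hy hyt ▸ hxt)
  · exact (notMem_emap he hye).elim
  · exact (notMem_tmap hT hyT).elim
  · exact (notMem_endmap htb hyb).elim
  · exact (notMem_endmap hta hya).elim
  · obtain rfl := D.vmap_eq_of_mem hy hyt
    exact .inr ⟨a, hta, hxa⟩
  · exact (notMem_endmap hab hya).elim
  · exact (notMem_tmap hT hyT).elim

/-- The part of the full atom of `e` that remains when only the endpoints of `e` lying in `S` are
accessible: `η(e)`, the sets `η(w)` for endpoints `w ∈ S`, and, when both endpoints lie in `S`, the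
sets `η(T)` for triangles `T` through `e`. For `S = univ` it is the full atom of `e`. -/
def edgeRegion (D : ESD G H) (e : Sym2 W) (S : Set W) : Set V :=
  {x | x ∈ D.emap e ∨ (∃ w ∈ e, w ∈ S ∧ x ∈ D.vmap w) ∨
    ∃ T, IsTriangle H T ∧ (∀ w ∈ e, w ∈ T ∧ w ∈ S) ∧ x ∈ D.tmap T}

section EdgeRegion

variable {D : ESD G H} {e : Sym2 W} {S : Set W} {x y : V}

theorem mem_of_mem_edgeRegion_of_mem_vmap (he : e ∈ H.edgeSet) (hy : y ∈ D.edgeRegion e S) {w : W}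
    (hyw : y ∈ D.vmap w) : w ∈ e ∧ w ∈ S := by
  rcases hy with hye | ⟨w', hw', hw'S, hyw'⟩ | ⟨T, hT, -, hyT⟩
  · exact ((D.disj_ve w e he).notMem_of_mem_left hyw hye).elim
  · exact D.vmap_eq_of_mem hyw hyw' ▸ ⟨hw', hw'S⟩
  · exact ((D.disj_vt w T hT).notMem_of_mem_left hyw hyT).elim

theorem eq_of_mem_edgeRegion_of_mem_emap (he : e ∈ H.edgeSet) (hy : y ∈ D.edgeRegion e S)
    {e' : Sym2 W} (he' : e' ∈ H.edgeSet) (hye' : y ∈ D.emap e') : e' = e := by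
  rcases hy with hye | ⟨w, -, -, hyw⟩ | ⟨T, hT, -, hyT⟩
  · exact D.emap_eq_of_mem he' he hye' hye
  · exact ((D.disj_ve w e' he').notMem_of_mem_left hyw hye').elim
  · exact ((D.disj_et e' T he' hT).notMem_of_mem_left hye' hyT).elim

theorem mem_of_mem_edgeRegion_of_mem_tmap (he : e ∈ H.edgeSet) (hy : y ∈ D.edgeRegion e S)
    {T : Set W} (hT : IsTriangle H T) (hyT : y ∈ D.tmap T) : ∀ w ∈ e, w ∈ T ∧ w ∈ S := by
  rcases hy with hye | ⟨w, -, -, hyw⟩ | ⟨T', hT', heT', hyT'⟩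
  · exact ((D.disj_et e T he hT).notMem_of_mem_left hye hyT).elim
  · exact ((D.disj_vt w T hT).notMem_of_mem_left hyw hyT).elim
  · exact D.tmap_eq_of_mem hT hT' hyT hyT' ▸ heT'

theorem exists_mem_endmap_of_adj_edgeRegion (he : e ∈ H.edgeSet)
    (hS : ∀ w a, s(w, a) = e → y ∈ D.endmap w a → w ∈ S) (hxy : G.Adj x y)
    (hy : y ∈ D.edgeRegion e S) (hx : x ∉ D.edgeRegion e S) :
    ∃ w ∈ e, w ∈ S ∧ ∃ a, H.Adj w a ∧ s(w, a) ≠ e ∧ x ∈ D.endmap w a := by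
  have eq_of_mem_endmap {a b : W} (hab : H.Adj a b) (h : y ∈ D.endmap a b) : s(a, b) = e :=
    eq_of_mem_edgeRegion_of_mem_emap he hy hab (D.endmap_subset a b hab h)
  have ne_of_mem_endmap {a b : W} (hab : H.Adj a b) (h : x ∈ D.endmap a b) : s(a, b) ≠ e :=
    fun hne => hx (.inl (hne ▸ D.endmap_subset a b hab h))
  rcases D.edge_cond x y hxy with ⟨t, hxt, hyt⟩ | ⟨e', he', hxe', hye'⟩ | ⟨T, hT, hxT, hyT⟩ |
    ⟨t, a, b, hta, htb, -, hxa, hyb⟩ | ⟨t, a, hta, ⟨hxt, hya⟩ | ⟨hyt, hxa⟩⟩ |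
    ⟨T, a, b, hT, ha, hb, hab, ⟨hxT, hya, hyb⟩ | ⟨hyT, hxa, hxb⟩⟩
  · obtain ⟨hte, htS⟩ := mem_of_mem_edgeRegion_of_mem_vmap he hy hyt
    exact (hx (.inr (.inl ⟨t, hte, htS, hxt⟩))).elim
  · exact (hx (.inl (eq_of_mem_edgeRegion_of_mem_emap he hy he' hye' ▸ hxe'))).elim
  · have heT := mem_of_mem_edgeRegion_of_mem_tmap he hy hT hyT
    exact (hx (.inr (.inr ⟨T, hT, heT, hxT⟩))).elim
  · obtain rfl := eq_of_mem_endmap htb hyb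
    exact ⟨t, Sym2.mem_mk_left t b, hS t b rfl hyb, a, hta, ne_of_mem_endmap hta hxa, hxa⟩
  · obtain rfl := eq_of_mem_endmap hta hya
    exact (hx (.inr (.inl ⟨t, Sym2.mem_mk_left t a, hS t a rfl hya, hxt⟩))).elim
  · obtain ⟨hte, htS⟩ := mem_of_mem_edgeRegion_of_mem_vmap he hy hyt
    exact ⟨t, hte, htS, a, hta, ne_of_mem_endmap hta hxa, hxa⟩
  · obtain rfl := eq_of_mem_endmap hab hya
    have heT : ∀ w ∈ s(a, b), w ∈ T ∧ w ∈ S := Sym2.ball.2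
      ⟨⟨ha, hS a b rfl hya⟩, hb, hS b a Sym2.eq_swap hyb⟩
    exact (hx (.inr (.inr ⟨T, hT, heT, hxT⟩))).elim
  · have heT := mem_of_mem_edgeRegion_of_mem_tmap he hy hT hyT
    rcases hT.mem_or_mem_of_subset (H.not_isDiag_of_mem_edgeSet he) (fun w hw => (heT w hw).1)
      ha hb hab.ne with hae | hbe
    · exact ⟨a, hae, (heT a hae).2, b, hab, ne_of_mem_endmap hab hxa, hxa⟩
    · exact ⟨b, hbe, (heT b hbe).2, a, hab.symm, ne_of_mem_endmap hab.symm hxb, hxb⟩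

end EdgeRegion

theorem atomSet_subset_vmap_or_edgeRegion (D : ESD G H) {a : AtomLabel W} (ha : ValidAtom H a) :
    (∃ u, D.atomSet a ⊆ D.vmap u) ∨ ∃ e ∈ H.edgeSet, D.atomSet a ⊆ D.edgeRegion e Set.univ := by
  cases a with
  | bot e => exact .inr ⟨e, ha, fun x hx => .inl hx.1⟩
  | half u v =>
    refine .inr ⟨s(u, v), ha, ?_⟩
    rintro x (hx | hx)
    · exact .inr (.inl ⟨u, Sym2.mem_mk_left u v, trivial, hx⟩)
    · exact .inl hx.1
  | full e =>
    refine .inr ⟨e, ha, ?_⟩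
    induction e using Sym2.ind with
    | _ u v =>
      rintro x (((hx | hx) | hx) | hx)
      · exact .inr (.inl ⟨u, Sym2.mem_mk_left u v, trivial, hx⟩)
      · exact .inr (.inl ⟨v, Sym2.mem_mk_right u v, trivial, hx⟩)
      · exact .inl hx
      · obtain ⟨T, ⟨hT, heT⟩, hxT⟩ := Set.mem_iUnion₂.1 hx
        exact .inr (.inr ⟨T, hT, fun w hw => ⟨heT w hw, trivial⟩, hxT⟩)
  | vert u => exact .inl ⟨u, subset_rfl⟩
  | tri T =>
    obtain ⟨u, v, w, huv, -, -, rfl⟩ := id ha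
    exact .inr ⟨s(u, v), huv, fun x hx => .inr (.inr ⟨_, ha, by simp, hx⟩)⟩

end ESD

/-- `z` is peripheral, witnessed by the degree-one vertex `w` of `H`. -/
def PeripheralAt (D : ESD G H) (w : W) (z : V) : Prop :=
  ∃ u, H.Adj w u ∧ (∀ u', H.Adj w u' → u' = u) ∧ D.endmap w u = {z}

/-- `P` meets `η(wa, w)` for some edge `wa` of `H`. -/
def Visits (D : ESD G H) (P : Set V) (w : W) : Prop :=
  ∃ a, H.Adj w a ∧ (P ∩ D.endmap w a).Nonempty

/-- `P` meets `η(wa, w)` and `η(wb, w)` for two distinct edges `wa`, `wb` of `H`, as a path does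
when it passes from one strip to another through `w`. -/
def Crosses (D : ESD G H) (P : Set V) (w : W) : Prop :=
  ∃ a b, a ≠ b ∧ H.Adj w a ∧ H.Adj w b ∧
    (P ∩ D.endmap w a).Nonempty ∧ (P ∩ D.endmap w b).Nonempty

/-- `P` has its peripheral vertex at `w` or crosses `w`. Either way, every set visiting `w`
touches `P`. -/
def Occupies (D : ESD G H) (P : Set V) (w : W) : Prop :=
  (∃ z ∈ P, PeripheralAt D w z) ∨ Crosses D P w

/-- `P` induces a connected subgraph of `G` and contains a peripheral vertex; this is what is used
of a path with a peripheral endpoint. -/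
structure Anchored (D : ESD G H) (P : Set V) : Prop where
  preconnected : (G.induce P).Preconnected
  exists_peripheral : ∃ z ∈ P, Peripheral D z

variable {D : ESD G H} {P Q : Set V}

theorem PeripheralAt.exists_mem_emap {w : W} {z : V} (hz : PeripheralAt D w z) :
    ∃ e ∈ H.edgeSet, w ∈ e ∧ z ∈ D.emap e := by
  obtain ⟨u, hwu, -, hend⟩ := hz
  exact ⟨s(w, u), hwu, Sym2.mem_mk_left w u, D.endmap_subset w u hwu (hend ▸ rfl)⟩

theorem PeripheralAt.visits {w : W} {z : V} (hz : PeripheralAt D w z) (hzP : z ∈ P) :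
    Visits D P w := by
  obtain ⟨u, hwu, -, hend⟩ := hz
  exact ⟨u, hwu, z, hzP, hend ▸ rfl⟩

theorem PeripheralAt.mem_of_visits {w : W} {z : V} (hz : PeripheralAt D w z)
    (hP : Visits D P w) : z ∈ P := by
  obtain ⟨u, -, hleaf, hend⟩ := hz
  obtain ⟨a, hwa, y, hyP, hya⟩ := hP
  rw [hleaf a hwa, hend] at hya
  exact hya ▸ hyP

theorem Occupies.visits {w : W} (hP : Occupies D P w) : Visits D P w := by
  rcases hP with ⟨z, hzP, hz⟩ | ⟨a, -, -, hwa, -, hPa, -⟩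
  · exact hz.visits hzP
  · exact ⟨a, hwa, hPa⟩

theorem eq_of_not_touches_of_inter_endmap_nonempty (hPQ : ¬ Touches G P Q) {w a b : W}
    (hwa : H.Adj w a) (hwb : H.Adj w b) (hPa : (P ∩ D.endmap w a).Nonempty)
    (hQb : (Q ∩ D.endmap w b).Nonempty) : a = b := by
  by_contra hab
  obtain ⟨x, hxP, hxa⟩ := hPa
  obtain ⟨y, hyQ, hyb⟩ := hQb
  exact hPQ ⟨x, hxP, y, hyQ, .inr (D.fully_adj w a b hwa hwb hab x hxa y hyb)⟩

theorem Occupies.touches_of_visits {w : W} (hP : Occupies D P w) (hQ : Visits D Q w) :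
    Touches G P Q := by
  rcases hP with ⟨z, hzP, hz⟩ | ⟨a, b, hab, hwa, hwb, hPa, hPb⟩
  · exact ⟨z, hzP, z, hz.mem_of_visits hQ, .inl rfl⟩
  · by_contra hPQ
    obtain ⟨c, hwc, hQc⟩ := hQ
    have hac := eq_of_not_touches_of_inter_endmap_nonempty hPQ hwa hwc hPa hQc
    have hbc := eq_of_not_touches_of_inter_endmap_nonempty hPQ hwb hwc hPb hQc
    exact hab (hac.trans hbc.symm)

theorem exists_crosses_of_preconnected (hP : (G.induce P).Preconnected) {e e' : Sym2 W}
    (he : e ∈ H.edgeSet) (he' : e' ∈ H.edgeSet) (hne : e' ≠ e)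
    (hPe : (P ∩ D.emap e).Nonempty) (hPe' : (P ∩ D.emap e').Nonempty) :
    ∃ w ∈ e, Crosses D P w := by
  -- With this `S`, an endpoint `w` through which `P` leaves the region is one where `P` also meets
  -- `η(e, w)`; an exit from the full atom could start at a vertex of `η(w)` entered from elsewhere.
  let S : Set W := {w | ∃ a, s(w, a) = e ∧ (P ∩ D.endmap w a).Nonempty}
  obtain ⟨y₀, hy₀P, hy₀e⟩ := hPe
  obtain ⟨z, hzP, hze'⟩ := hPe'
  have hzS : z ∉ D.edgeRegion e S :=
    fun hz => hne (ESD.eq_of_mem_edgeRegion_of_mem_emap he hz he' hze')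
  obtain ⟨y, hyP, x, hxP, hy, hx, hyx⟩ :=
    exists_adj_mem_notMem_of_preconnected hP hy₀P (Or.inl hy₀e) hzP hzS
  have hyS (w a : W) (hwa : s(w, a) = e) (hya : y ∈ D.endmap w a) : w ∈ S :=
    ⟨a, hwa, y, hyP, hya⟩
  obtain ⟨w, hwe, ⟨a, rfl, hPa⟩, b, hwb, hbe, hxb⟩ :=
    ESD.exists_mem_endmap_of_adj_edgeRegion he hyS hyx.symm hy hx
  have hab : a ≠ b := by
    rintro rfl
    exact hbe rfl
  exact ⟨w, hwe, a, b, hab, he, hwb, hPa, x, hxP, hxb⟩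

namespace Anchored

theorem exists_occupies (hP : Anchored D P) {e : Sym2 W} (he : e ∈ H.edgeSet)
    (hPe : (P ∩ D.emap e).Nonempty) : ∃ w ∈ e, Occupies D P w := by
  obtain ⟨z, hzP, w, hw⟩ := hP.exists_peripheral
  obtain ⟨e', he', hwe', hze'⟩ := PeripheralAt.exists_mem_emap hw
  by_cases hee' : e' = e
  · exact ⟨w, hee' ▸ hwe', .inl ⟨z, hzP, hw⟩⟩
  · obtain ⟨x, hxe, hx⟩ :=
      exists_crosses_of_preconnected hP.preconnected he he' hee' hPe ⟨z, hzP, hze'⟩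
    exact ⟨x, hxe, .inr hx⟩

theorem occupies_of_not_touches (hP : Anchored D P) (hPQ : ¬ Touches G P Q) {w a : W}
    (hwa : H.Adj w a) (hPa : (P ∩ D.endmap w a).Nonempty) (hQ : Visits D Q w) :
    Occupies D P a := by
  obtain ⟨x, hx, hPx⟩ := hP.exists_occupies (e := s(w, a)) hwa
    (hPa.mono (Set.inter_subset_inter_right P (D.endmap_subset w a hwa)))
  rcases Sym2.mem_iff.1 hx with rfl | rfl
  · exact (hPQ (hPx.touches_of_visits hQ)).elim
  · exact hPx

theorem touches_of_visits (hP : Anchored D P) (hQ : Anchored D Q) {w : W} (hPw : Visits D P w)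
    (hQw : Visits D Q w) : Touches G P Q := by
  by_contra hPQ
  obtain ⟨a, hwa, hPa⟩ := id hPw
  obtain ⟨b, hwb, hQb⟩ := id hQw
  obtain rfl := eq_of_not_touches_of_inter_endmap_nonempty hPQ hwa hwb hPa hQb
  have hPocc := hP.occupies_of_not_touches hPQ hwa hPa hQw
  have hQocc := hQ.occupies_of_not_touches (mt Touches.symm hPQ) hwa hQb hPw
  exact hPQ (hPocc.touches_of_visits hQocc.visits)

theorem visits_of_touches_vmap (hP : Anchored D P) {u : W} (h : Touches G (D.vmap u) P) :
    Visits D P u := by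
  obtain ⟨z, hzP, w, hw⟩ := hP.exists_peripheral
  obtain ⟨e, he, -, hze⟩ := PeripheralAt.exists_mem_emap hw
  obtain ⟨x, hxP, hxu, y, hy, hxy⟩ := h.exists_adj_of_preconnected hP.preconnected hzP
    ((D.disj_ve u e he).notMem_of_mem_right hze)
  obtain ⟨a, hua, hxa⟩ := (D.mem_vmap_or_mem_endmap_of_adj hxy hy).resolve_left hxu
  exact ⟨a, hua, x, hxP, hxa⟩

theorem exists_visits_of_touches_edgeRegion (hP : Anchored D P) {e : Sym2 W} (he : e ∈ H.edgeSet)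
    (h : Touches G (D.edgeRegion e Set.univ) P) : ∃ w ∈ e, Visits D P w := by
  obtain ⟨z, hzP, w, hw⟩ := hP.exists_peripheral
  obtain ⟨e', he', hwe', hze'⟩ := PeripheralAt.exists_mem_emap hw
  by_cases hz : z ∈ D.edgeRegion e Set.univ
  · obtain rfl := ESD.eq_of_mem_edgeRegion_of_mem_emap he hz he' hze'
    exact ⟨w, hwe', PeripheralAt.visits hw hzP⟩
  · obtain ⟨x, hxP, hx, y, hy, hxy⟩ := h.exists_adj_of_preconnected hP.preconnected hzP hz
    obtain ⟨v, hve, -, a, hva, -, hxa⟩ :=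
      ESD.exists_mem_endmap_of_adj_edgeRegion he (fun _ _ _ _ => trivial) hxy hy hx
    exact ⟨v, hve, a, hva, x, hxP, hxa⟩

end Anchored

theorem exists_pair_visits_of_touches_atomSet (D : ESD G H) {a : AtomLabel W}
    (ha : ValidAtom H a) : ∃ u v, ∀ P, Anchored D P → Touches G (D.atomSet a) P →
      Visits D P u ∨ Visits D P v := by
  rcases D.atomSet_subset_vmap_or_edgeRegion ha with ⟨u, hsub⟩ | ⟨e, he, hsub⟩
  · exact ⟨u, u, fun P hP ht => .inl (hP.visits_of_touches_vmap (ht.mono_left hsub))⟩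
  · induction e using Sym2.ind with
    | _ u v =>
      refine ⟨u, v, fun P hP ht => ?_⟩
      obtain ⟨w, hw, hPw⟩ := hP.exists_visits_of_touches_edgeRegion he (ht.mono_left hsub)
      rcases Sym2.mem_iff.1 hw with rfl | rfl
      · exact .inl hPw
      · exact .inr hPw

theorem InducedPathFun.anchored_range {m : ℕ} {p : Fin (m + 1) → V} (h : InducedPathFun G p)
    (hp : Peripheral D (p 0) ∨ Peripheral D (p (Fin.last m))) : Anchored D (Set.range p) where
  preconnected := h.preconnected_induce_range
  exists_peripheral := hp.elim (fun h₀ => ⟨_, ⟨0, rfl⟩, h₀⟩) (fun hm => ⟨_, ⟨Fin.last m, rfl⟩, hm⟩)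

theorem stmt11_general {P₁ P₂ P₃ : Set V} (hP₁ : Anchored D P₁) (hP₂ : Anchored D P₂)
    (hP₃ : Anchored D P₃) (h₁₂ : ¬ Touches G P₁ P₂) (h₁₃ : ¬ Touches G P₁ P₃)
    (h₂₃ : ¬ Touches G P₂ P₃) {a : AtomLabel W} (ha : ValidAtom H a) :
    ¬ (Touches G (D.atomSet a) P₁ ∧ Touches G (D.atomSet a) P₂ ∧
       Touches G (D.atomSet a) P₃) := by
  rintro ⟨t₁, t₂, t₃⟩
  obtain ⟨u, v, huv⟩ := exists_pair_visits_of_touches_atomSet D ha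
  have not_both₁₂ (w : W) : Visits D P₁ w → ¬ Visits D P₂ w :=
    fun h₁ h₂ => h₁₂ (hP₁.touches_of_visits hP₂ h₁ h₂)
  have not_both₁₃ (w : W) : Visits D P₁ w → ¬ Visits D P₃ w :=
    fun h₁ h₃ => h₁₃ (hP₁.touches_of_visits hP₃ h₁ h₃)
  have not_both₂₃ (w : W) : Visits D P₂ w → ¬ Visits D P₃ w :=
    fun h₂ h₃ => h₂₃ (hP₂.touches_of_visits hP₃ h₂ h₃)
  grind [huv P₁ hP₁ t₁, huv P₂ hP₂ t₂, huv P₃ hP₃ t₃]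

end StripDecomposition

/-- if `P₁, P₂, P₃` are pairwise vertex-disjoint, pairwise non-adjacent
induced paths in `G`, each having a peripheral endpoint in the extended strip
decomposition `(H, η)` of `G`, then no atom of `(H, η)` intersects or is adjacent to all
three of them. -/
theorem stmt11 {V W : Type} (G : SimpleGraph V) (H : SimpleGraph W) (D : ESD G H)
    (m₁ m₂ m₃ : ℕ) (p₁ : Fin (m₁ + 1) → V) (p₂ : Fin (m₂ + 1) → V) (p₃ : Fin (m₃ + 1) → V)
    (h₁ : InducedPathFun G p₁) (h₂ : InducedPathFun G p₂) (h₃ : InducedPathFun G p₃)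
    (hd₁₂ : Disjoint (Set.range p₁) (Set.range p₂))
    (hd₁₃ : Disjoint (Set.range p₁) (Set.range p₃))
    (hd₂₃ : Disjoint (Set.range p₂) (Set.range p₃))
    (ha₁₂ : NonAdj G (Set.range p₁) (Set.range p₂))
    (ha₁₃ : NonAdj G (Set.range p₁) (Set.range p₃))
    (ha₂₃ : NonAdj G (Set.range p₂) (Set.range p₃))
    (hp₁ : Peripheral D (p₁ 0) ∨ Peripheral D (p₁ (Fin.last m₁)))
    (hp₂ : Peripheral D (p₂ 0) ∨ Peripheral D (p₂ (Fin.last m₂)))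
    (hp₃ : Peripheral D (p₃ 0) ∨ Peripheral D (p₃ (Fin.last m₃))) :
    ∀ a : AtomLabel W, ValidAtom H a →
      ¬ (Touches G (D.atomSet a) (Set.range p₁) ∧ Touches G (D.atomSet a) (Set.range p₂) ∧
         Touches G (D.atomSet a) (Set.range p₃)) :=
  fun _ ha => stmt11_general (h₁.anchored_range hp₁) (h₂.anchored_range hp₂) (h₃.anchored_range hp₃)
    (not_touches_of_disjoint_of_nonAdj hd₁₂ ha₁₂) (not_touches_of_disjoint_of_nonAdj hd₁₃ ha₁₃)
    (not_touches_of_disjoint_of_nonAdj hd₂₃ ha₂₃) ha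

end Paper
end
end

section
/- Let (H,η) be an extended strip decomposition of a graph G and let Q be an induced path in G. Let W be a visit by Q of a feature f of (H,η) that is a vertex or a triangle of H, let W1 be the visit on Q directly before W and W2 the visit on Q directly after W (if they exist). Then W1 and W2, if existent, are visits of edges of H incident to f, and if both exist then they are visits of the same edge of H. -/
noncomputable section

namespace Paper

/-- The set `η(f)` for a feature `f` of `(H, η)` that is a vertex (`Sum.inl`) or a
triangle (`Sum.inr`) of `H`. -/
def featureSet {V W : Type} {G : SimpleGraph V} {H : SimpleGraph W} (D : ESD G H) :
    W ⊕ Set W → Set V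
  | Sum.inl u => D.vmap u
  | Sum.inr T => D.tmap T

/-- The edge `e` of `H` is incident to the feature `f` (a vertex or a triangle of `H`). -/
def FeatIncident {W : Type} : W ⊕ Set W → Sym2 W → Prop
  | Sum.inl u, e => u ∈ e
  | Sum.inr T, e => ∀ x ∈ e, x ∈ T

/-!
A vertex `y` outside `η(f)` with a neighbour in `η(f)` lies in `η(e, u)` for some edge `e` of `H`
incident to `f` and every end `u` of `e` that belongs to `f`. Any two edges of `H` incident to `f`
share a vertex `u` of `f`: the vertex `f` itself, or, if `f` is a triangle, by pigeonhole. If the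
edges are distinct, `η(e, u)` and `η(e', u)` are fully adjacent. But the path leaves `η(f)` at two
non-adjacent vertices, since it is induced, so both departures are into the same `η(e)`.
-/

/-- `f` is a feature of `H` of one of the two kinds under consideration: a vertex (`Sum.inl`) or
a triangle (`Sum.inr`). -/
def IsVertexOrTriangle {W : Type} (H : SimpleGraph W) (f : W ⊕ Set W) : Prop :=
  ∀ T, f = Sum.inr T → IsTriangle H T

/-- The vertices of `H` belonging to the feature `f`: the vertex `f` itself or the three vertices
of the triangle `f`. -/
def featureVerts {W : Type} : W ⊕ Set W → Set W
  | Sum.inl u => {u}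
  | Sum.inr T => T

/-- For an edge `e` of `H` incident to `f`, the part of `η(e)` to which `η(f)` may be adjacent:
the intersection of the sets `η(e, u)` over the ends `u` of `e` that belong to `f`. This is
`η(e, u)` if `f = u` is a vertex and `η(e, u) ∩ η(e, v)` if `f` is a triangle containing
`e = uv`. -/
def ESD.attachSet {V W : Type} {G : SimpleGraph V} {H : SimpleGraph W} (D : ESD G H)
    (f : W ⊕ Set W) (e : Sym2 W) : Set V :=
  {y | ∀ u u', e = s(u, u') → u ∈ featureVerts f → y ∈ D.endmap u u'}

section Incidence

variable {W : Type} {H : SimpleGraph W}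

lemma isVertexOrTriangle_inl (u : W) : IsVertexOrTriangle H (Sum.inl u) := nofun

lemma IsTriangle.isVertexOrTriangle_inr {T : Set W} (hT : IsTriangle H T) :
    IsVertexOrTriangle H (Sum.inr T) := by
  rintro _ ⟨⟩
  exact hT

lemma IsTriangle.exists_mem_mem_of_subset {T : Set W} (hT : IsTriangle H T) {e e' : Sym2 W}
    (he : e ∈ H.edgeSet) (he' : e' ∈ H.edgeSet) (heT : ∀ x ∈ e, x ∈ T) (heT' : ∀ x ∈ e', x ∈ T) :
    ∃ u ∈ e, u ∈ e' := by
  obtain ⟨t₁, t₂, t₃, -, -, -, rfl⟩ := hT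
  induction e with | _ a b
  induction e' with | _ c d
  have hab : a ≠ b := he.ne
  have hcd : c ≠ d := he'.ne
  simp only [Sym2.mem_iff, Set.mem_insert_iff, Set.mem_singleton_iff, forall_eq_or_imp,
    forall_eq, exists_eq_or_imp, exists_eq_left] at heT heT' ⊢
  grind

lemma IsVertexOrTriangle.exists_common_vertex {f : W ⊕ Set W} (hf : IsVertexOrTriangle H f)
    {e e' : Sym2 W} (he : e ∈ H.edgeSet) (he' : e' ∈ H.edgeSet)
    (hfe : FeatIncident f e) (hfe' : FeatIncident f e') :
    ∃ u ∈ featureVerts f, u ∈ e ∧ u ∈ e' := by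
  rcases f with v | T
  · exact ⟨v, rfl, hfe, hfe'⟩
  · obtain ⟨u, hu, hu'⟩ := (hf T rfl).exists_mem_mem_of_subset he he' hfe hfe'
    exact ⟨u, hfe u hu, hu, hu'⟩

end Incidence

namespace ESD

variable {V W : Type} {G : SimpleGraph V} {H : SimpleGraph W} (D : ESD G H)
  {f g : W ⊕ Set W} {e e' : Sym2 W} {x x' y y' : V}

lemma eq_of_mem_featureSet (hf : IsVertexOrTriangle H f) (hg : IsVertexOrTriangle H g)
    (hxf : x ∈ featureSet D f) (hxg : x ∈ featureSet D g) : f = g := by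
  by_contra hne
  refine Set.disjoint_left.1 (?_ : Disjoint (featureSet D f) (featureSet D g)) hxf hxg
  rcases f with u | T <;> rcases g with u' | T'
  · exact D.disj_vv u u' (ne_of_apply_ne Sum.inl hne)
  · exact D.disj_vt u T' (hg T' rfl)
  · exact (D.disj_vt u' T (hf T rfl)).symm
  · exact D.disj_tt T T' (hf T rfl) (hg T' rfl) (ne_of_apply_ne Sum.inr hne)

lemma disjoint_featureSet_emap (hf : IsVertexOrTriangle H f) (he : e ∈ H.edgeSet) :
    Disjoint (featureSet D f) (D.emap e) := by
  rcases f with u | T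
  · exact D.disj_ve u e he
  · exact (D.disj_et e T he (hf T rfl)).symm

lemma endmap_subset_attachSet_inl (v u : W) :
    D.endmap v u ⊆ D.attachSet (Sum.inl v) s(v, u) := by
  rintro y hy _ w hvw rfl
  rwa [← Sym2.congr_right.1 hvw]

lemma endmap_inter_endmap_subset_attachSet_inr (T : Set W) (u u' : W) :
    D.endmap u u' ∩ D.endmap u' u ⊆ D.attachSet (Sum.inr T) s(u, u') := by
  rintro y ⟨hy, hy'⟩ w w' hww' -
  rcases Sym2.eq_iff.1 hww' with ⟨rfl, rfl⟩ | ⟨rfl, rfl⟩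
  · exact hy
  · exact hy'

lemma exists_mem_attachSet_of_adj (hf : IsVertexOrTriangle H f) (hxy : G.Adj x y)
    (hx : x ∈ featureSet D f) (hy : y ∉ featureSet D f) :
    ∃ e ∈ H.edgeSet, FeatIncident f e ∧ y ∈ D.attachSet f e := by
  have notMem_emap : ∀ e ∈ H.edgeSet, x ∉ D.emap e := fun e he =>
    Set.disjoint_left.1 (D.disjoint_featureSet_emap hf he) hx
  have notMem_endmap : ∀ u u', H.Adj u u' → x ∉ D.endmap u u' := fun u u' huu' hxu =>
    notMem_emap s(u, u') huu' (D.endmap_subset u u' huu' hxu)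
  have feature_eq : ∀ g, IsVertexOrTriangle H g → x ∈ featureSet D g → f = g := fun g hg =>
    D.eq_of_mem_featureSet hf hg hx
  rcases D.edge_cond x y hxy with ⟨v, hxv, hyv⟩ | ⟨e, he, hxe, -⟩ | ⟨T, hT, hxT, hyT⟩ |
    ⟨v, u, -, hvu, -, -, hxvu, -⟩ | ⟨v, u, hvu, ⟨hxv, hyvu⟩ | ⟨-, hxvu⟩⟩ |
    ⟨T, u, u', hT, hu, hu', huu', ⟨hxT, hyuu'⟩ | ⟨-, hxuu'⟩⟩
  · obtain rfl := feature_eq (Sum.inl v) (isVertexOrTriangle_inl v) hxv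
    exact absurd hyv hy
  · exact absurd hxe (notMem_emap e he)
  · obtain rfl := feature_eq (Sum.inr T) hT.isVertexOrTriangle_inr hxT
    exact absurd hyT hy
  · exact absurd hxvu (notMem_endmap v u hvu)
  · obtain rfl := feature_eq (Sum.inl v) (isVertexOrTriangle_inl v) hxv
    exact ⟨s(v, u), hvu, Sym2.mem_mk_left v u, D.endmap_subset_attachSet_inl v u hyvu⟩
  · exact absurd hxvu (notMem_endmap v u hvu)
  · obtain rfl := feature_eq (Sum.inr T) hT.isVertexOrTriangle_inr hxT
    exact ⟨s(u, u'), huu', Sym2.ball.2 ⟨hu, hu'⟩,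
      D.endmap_inter_endmap_subset_attachSet_inr T u u' hyuu'⟩
  · exact absurd hxuu'.1 (notMem_endmap u u' huu')

lemma attachSet_subset_emap (hf : IsVertexOrTriangle H f) (he : e ∈ H.edgeSet)
    (hfe : FeatIncident f e) : D.attachSet f e ⊆ D.emap e := by
  intro y hy
  obtain ⟨u, hu, hue, -⟩ := hf.exists_common_vertex he he hfe hfe
  obtain ⟨u', rfl⟩ := hue
  exact D.endmap_subset u u' he (hy u u' rfl hu)

lemma adj_of_mem_attachSet_of_ne (hf : IsVertexOrTriangle H f)
    (he : e ∈ H.edgeSet) (he' : e' ∈ H.edgeSet)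
    (hfe : FeatIncident f e) (hfe' : FeatIncident f e') (hne : e ≠ e')
    (hy : y ∈ D.attachSet f e) (hy' : y' ∈ D.attachSet f e') : G.Adj y y' := by
  obtain ⟨v, hv, hve, hve'⟩ := hf.exists_common_vertex he he' hfe hfe'
  obtain ⟨u, rfl⟩ := hve
  obtain ⟨u', rfl⟩ := hve'
  have huu' : u ≠ u' := ne_of_apply_ne (fun w => s(v, w)) hne
  exact D.fully_adj v u u' he he' huu' y (hy v u rfl hv) y' (hy' v u' rfl hv)

lemma exists_edge_of_adj (hf : IsVertexOrTriangle H f) (hxy : G.Adj x y)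
    (hx : x ∈ featureSet D f) (hy : y ∉ featureSet D f) :
    ∃ e ∈ H.edgeSet, y ∈ D.emap e ∧ FeatIncident f e := by
  obtain ⟨e, he, hfe, hye⟩ := D.exists_mem_attachSet_of_adj hf hxy hx hy
  exact ⟨e, he, D.attachSet_subset_emap hf he hfe hye, hfe⟩

lemma exists_common_edge_of_not_adj (hf : IsVertexOrTriangle H f)
    (hxy : G.Adj x y) (hx : x ∈ featureSet D f) (hy : y ∉ featureSet D f)
    (hxy' : G.Adj x' y') (hx' : x' ∈ featureSet D f) (hy' : y' ∉ featureSet D f)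
    (hyy' : ¬ G.Adj y y') :
    ∃ e ∈ H.edgeSet, y ∈ D.emap e ∧ y' ∈ D.emap e ∧ FeatIncident f e := by
  obtain ⟨e, he, hfe, hye⟩ := D.exists_mem_attachSet_of_adj hf hxy hx hy
  obtain ⟨e', he', hfe', hye'⟩ := D.exists_mem_attachSet_of_adj hf hxy' hx' hy'
  obtain rfl : e = e' := by
    by_contra hne
    exact hyy' (D.adj_of_mem_attachSet_of_ne hf he he' hfe hfe' hne hye hye')
  have hsub := D.attachSet_subset_emap hf he hfe
  exact ⟨e, he, hsub hye, hsub hye', hfe⟩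

end ESD

/-- Between `p i` and `p j` the path may leave `η(f)` and come back, so this also compares the
edges visited before and after different visits of `f`. -/
theorem stmt12_general {V W : Type} {G : SimpleGraph V} {H : SimpleGraph W} (D : ESD G H)
    {m : ℕ} {p : Fin m → V} (hp : InducedPathFun G p)
    {f : W ⊕ Set W} (hf : IsVertexOrTriangle H f) {i j : Fin m} (hij : i ≤ j)
    (hi_mem : p i ∈ featureSet D f) (hj_mem : p j ∈ featureSet D f)
    (hmax₁ : 0 < (i : ℕ) → p ⟨i - 1, by omega⟩ ∉ featureSet D f)
    (hmax₂ : ∀ hj1 : (j : ℕ) + 1 < m, p ⟨j + 1, hj1⟩ ∉ featureSet D f) :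
    (0 < (i : ℕ) → ∃ e ∈ H.edgeSet, p ⟨i - 1, by omega⟩ ∈ D.emap e ∧ FeatIncident f e) ∧
    (∀ hj1 : (j : ℕ) + 1 < m, ∃ e ∈ H.edgeSet, p ⟨j + 1, hj1⟩ ∈ D.emap e ∧ FeatIncident f e) ∧
    (0 < (i : ℕ) → ∀ hj1 : (j : ℕ) + 1 < m, ∃ e ∈ H.edgeSet,
      p ⟨i - 1, by omega⟩ ∈ D.emap e ∧ p ⟨j + 1, hj1⟩ ∈ D.emap e ∧ FeatIncident f e) := by
  have adj_before (hi : 0 < (i : ℕ)) : G.Adj (p i) (p ⟨i - 1, by omega⟩) :=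
    (hp.2 _ _).2 (Or.inr (Nat.sub_add_cancel hi))
  have adj_after (hj1 : (j : ℕ) + 1 < m) : G.Adj (p j) (p ⟨j + 1, hj1⟩) :=
    (hp.2 _ _).2 (Or.inl rfl)
  have not_adj (hi : 0 < (i : ℕ)) (hj1 : (j : ℕ) + 1 < m) :
      ¬ G.Adj (p ⟨i - 1, by omega⟩) (p ⟨j + 1, hj1⟩) := by
    rw [hp.2]
    dsimp only
    omega
  exact ⟨fun hi => D.exists_edge_of_adj hf (adj_before hi) hi_mem (hmax₁ hi),
    fun hj1 => D.exists_edge_of_adj hf (adj_after hj1) hj_mem (hmax₂ hj1),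
    fun hi hj1 => D.exists_common_edge_of_not_adj hf (adj_before hi) hi_mem (hmax₁ hi)
      (adj_after hj1) hj_mem (hmax₂ hj1) (not_adj hi hj1)⟩

/-- let `Q = (p 0, …, p (m-1))` be an induced path in `G` and let
`W = (p i, …, p j)` be a visit by `Q` of a feature `f` of the extended strip
decomposition `(H, η)` that is a vertex or a triangle of `H` (so the vertices
`p i, …, p j` all lie in `η(f)`, and the visit is maximal).  Then the visit directly
before `W` (containing `p (i-1)`, if `i > 0`) and the visit directly after `W`
(containing `p (j+1)`, if `j + 1 < m`) are visits of edges of `H` incident to `f`;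
moreover if both exist, they are visits of the same edge of `H`. -/
theorem stmt12 {V W : Type} (G : SimpleGraph V) (H : SimpleGraph W) (D : ESD G H)
    (m : ℕ) (p : Fin m → V) (hp : InducedPathFun G p)
    (f : W ⊕ Set W) (hf : ∀ T, f = Sum.inr T → IsTriangle H T)
    (i j : ℕ) (hij : i ≤ j) (hjm : j < m)
    (hin : ∀ l, ∀ hl : l < m, i ≤ l → l ≤ j → p ⟨l, hl⟩ ∈ featureSet D f)
    (hmax₁ : 0 < i → p ⟨i - 1, by omega⟩ ∉ featureSet D f)
    (hmax₂ : ∀ hj1 : j + 1 < m, p ⟨j + 1, hj1⟩ ∉ featureSet D f) :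
    (∀ hi : 0 < i, ∃ e ∈ H.edgeSet, p ⟨i - 1, by omega⟩ ∈ D.emap e ∧ FeatIncident f e) ∧
    (∀ hj1 : j + 1 < m, ∃ e ∈ H.edgeSet, p ⟨j + 1, hj1⟩ ∈ D.emap e ∧ FeatIncident f e) ∧
    (0 < i → ∀ hj1 : j + 1 < m, ∃ e ∈ H.edgeSet,
      p ⟨i - 1, by omega⟩ ∈ D.emap e ∧ p ⟨j + 1, hj1⟩ ∈ D.emap e ∧ FeatIncident f e) := by
  exact stmt12_general D hp hf (i := ⟨i, hij.trans_lt hjm⟩) (j := ⟨j, hjm⟩) hij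
    (hin i _ le_rfl hij) (hin j hjm hij le_rfl) hmax₁ hmax₂

end Paper
end
end

section
/- For every real ξ ∈ (0,1) and all reals k and n with e^{1/ξ} < k ≤ n, it holds that n^{1−ξ}·(1 + ln n) − k^{1−ξ}·(1 + ln k) ≥ (n − k) · n^{−ξ} · ((1−ξ)·(1 + ln n) + 1). -/
/-!
With `p = 1 - ξ`, the claim says that the graph of `f x = x ^ p * (1 + log x)` lies below its
tangent at `n`. Since `f'' x = x ^ (p - 2) * (p * (p - 1) * (1 + log x) + (2 * p - 1))` and the
sign of the second factor changes at most once, `f` is concave on the interval of those `x > 0`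
where this factor is nonpositive, and for `p ∈ (0, 1)` that interval contains every `x > e^{1/ξ}`.
-/

namespace Paper

open Set Real

theorem hasDerivAt_rpow_mul_const_mul_log_add (p a b : ℝ) {x : ℝ} (hx : 0 < x) :
    HasDerivAt (fun x ↦ x ^ p * (a * log x + b)) (x ^ (p - 1) * (p * (a * log x + b) + a)) x := by
  have h_rpow : HasDerivAt (fun x ↦ x ^ p) (p * x ^ (p - 1)) x :=
    hasDerivAt_rpow_const (Or.inl hx.ne')
  have h_log : HasDerivAt (fun x ↦ a * log x + b) (a * x⁻¹) x :=
    ((hasDerivAt_log hx.ne').const_mul a).add_const b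
  refine (h_rpow.mul h_log).congr_deriv ?_
  rw [rpow_sub_one hx.ne']
  ring

theorem hasDerivAt_rpow_mul_const_add_log (p c : ℝ) {x : ℝ} (hx : 0 < x) :
    HasDerivAt (fun x ↦ x ^ p * (c + log x)) (x ^ (p - 1) * (p * (c + log x) + 1)) x := by
  simpa only [one_mul, add_comm (log _) c] using hasDerivAt_rpow_mul_const_mul_log_add p 1 c hx

theorem hasDerivAt_deriv_rpow_mul_const_add_log (p c : ℝ) {x : ℝ} (hx : 0 < x) :
    HasDerivAt (fun x ↦ x ^ (p - 1) * (p * (c + log x) + 1))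
      (x ^ (p - 2) * (p * (p - 1) * (c + log x) + (2 * p - 1))) x := by
  convert hasDerivAt_rpow_mul_const_mul_log_add (p - 1) p (p * c + 1) hx using 1
  · ext y
    ring
  · rw [show p - 1 - 1 = p - 2 by ring]
    ring

theorem quasiconvexOn_const_mul_const_add_log (a c : ℝ) :
    QuasiconvexOn ℝ (Ioi 0) fun x ↦ a * (c + log x) := by
  have h_mono : MonotoneOn (fun x ↦ c + log x) (Ioi 0) := strictMonoOn_log.monotoneOn.const_add c
  rcases le_total 0 a with ha | ha
  · exact MonotoneOn.quasiconvexOn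
      (fun x hx y hy hxy ↦ mul_le_mul_of_nonneg_left (h_mono hx hy hxy) ha) (convex_Ioi 0)
  · exact AntitoneOn.quasiconvexOn
      (fun x hx y hy hxy ↦ mul_le_mul_of_nonpos_left (h_mono hx hy hxy) ha) (convex_Ioi 0)

theorem concaveOn_rpow_mul_const_add_log (p c : ℝ) :
    ConcaveOn ℝ {x ∈ Ioi 0 | p * (p - 1) * (c + log x) ≤ 1 - 2 * p}
      fun x ↦ x ^ p * (c + log x) := by
  refine concaveOn_of_hasDerivWithinAt2_nonpos (quasiconvexOn_const_mul_const_add_log _ c _)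
    (fun x hx ↦ (hasDerivAt_rpow_mul_const_add_log p c hx.1).continuousAt.continuousWithinAt)
    (fun x hx ↦ (hasDerivAt_rpow_mul_const_add_log p c (interior_subset hx).1).hasDerivWithinAt)
    (fun x hx ↦
      (hasDerivAt_deriv_rpow_mul_const_add_log p c (interior_subset hx).1).hasDerivWithinAt)
    fun x hx ↦ ?_
  obtain ⟨hx_pos, hx_le⟩ := interior_subset hx
  exact mul_nonpos_of_nonneg_of_nonpos (rpow_nonneg hx_pos.le _) (by linarith)

theorem sub_mul_le_sub_of_concaveOn_of_hasDerivAt {S : Set ℝ} {f : ℝ → ℝ} {f' x y : ℝ}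
    (hf : ConcaveOn ℝ S f) (hx : x ∈ S) (hy : y ∈ S) (hf' : HasDerivAt f f' y) :
    (y - x) * f' ≤ f y - f x := by
  rcases lt_trichotomy x y with hxy | rfl | hyx
  · have h_slope := hf.le_slope_of_hasDerivAt hx hy hxy hf'
    rwa [slope_def_field, le_div_iff₀' (sub_pos.2 hxy)] at h_slope
  · simp
  · have h_slope := hf.slope_le_of_hasDerivAt hy hx hyx hf'
    rw [slope_def_field, div_le_iff₀' (sub_pos.2 hyx)] at h_slope
    linarith

theorem one_sub_two_mul_le_of_exp_one_div_le {ξ x : ℝ} (hξ0 : 0 < ξ) (hξ1 : ξ ≤ 1)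
    (hx : exp (1 / ξ) ≤ x) : 1 - 2 * ξ ≤ ξ * (1 - ξ) * (1 + log x) := by
  have h_log : 1 ≤ ξ * log x :=
    (div_le_iff₀' hξ0).1 ((le_log_iff_exp_le ((exp_pos _).trans_le hx)).2 hx)
  calc
    1 - 2 * ξ ≤ (1 - ξ) * (ξ + 1) := by nlinarith
    _ ≤ (1 - ξ) * (ξ + ξ * log x) := by gcongr
    _ = ξ * (1 - ξ) * (1 + log x) := by ring

theorem stmt18_general (ξ c : ℝ) {k n : ℝ} (hk0 : 0 < k) (hn0 : 0 < n)
    (hk : 1 - 2 * ξ ≤ ξ * (1 - ξ) * (c + log k)) (hn : 1 - 2 * ξ ≤ ξ * (1 - ξ) * (c + log n)) :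
    (n - k) * n ^ (-ξ) * ((1 - ξ) * (c + log n) + 1) ≤
      n ^ (1 - ξ) * (c + log n) - k ^ (1 - ξ) * (c + log k) := by
  have h_tangent := sub_mul_le_sub_of_concaveOn_of_hasDerivAt
    (concaveOn_rpow_mul_const_add_log (1 - ξ) c)
    ⟨hk0, by linarith⟩ ⟨hn0, by linarith⟩ (hasDerivAt_rpow_mul_const_add_log (1 - ξ) c hn0)
  rwa [sub_sub_cancel_left, ← mul_assoc] at h_tangent

/-- for every real `ξ ∈ (0,1)` and all reals `k`, `n` with
`e^{1/ξ} < k ≤ n`, one has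
`n^{1-ξ}·(1 + ln n) - k^{1-ξ}·(1 + ln k) ≥ (n - k)·n^{-ξ}·((1-ξ)·(1 + ln n) + 1)`. -/
theorem stmt18 (ξ k n : ℝ) (hξ0 : 0 < ξ) (hξ1 : ξ < 1)
    (hk : Real.exp (1 / ξ) < k) (hkn : k ≤ n) :
    (n - k) * n ^ (-ξ) * ((1 - ξ) * (1 + Real.log n) + 1) ≤
      n ^ (1 - ξ) * (1 + Real.log n) - k ^ (1 - ξ) * (1 + Real.log k) := by
  have hk0 : 0 < k := (exp_pos _).trans hk
  exact stmt18_general ξ 1 hk0 (hk0.trans_le hkn)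
    (one_sub_two_mul_le_of_exp_one_div_le hξ0 hξ1.le hk.le)
    (one_sub_two_mul_le_of_exp_one_div_le hξ0 hξ1.le (hk.le.trans hkn))

end Paper
end
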